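/- There exist universal constants c > 0 and n₀ such that for all n ≥ n₀, r ≥ 1, and k with n·r ≤ k ≤ n²: if a randomized t-round adaptive algorithm, which in each round makes k linear measurements of the concatenated vector (vec(A), vec(B)) ∈ ℝ^{2n²}, is such that for every pair of n×n real matrices A, B it outputs a matrix X of rank at most r satisfying ‖A·X − B‖ ≤ 2·min{‖A·X' − B‖ : rank(X') ≤ r} with probability at least 9/10 (over the seed), then t ≥ c·log(n²/k)/log log n. -/

import Mathlib

/-!
The lower bound comes from instances whose optimum is zero: on these, an approximation within any
constant factor has to be exact. They encode pointer chasing: given matrices `p₀, …, p_t` of size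
`d × d` with `(t + 2) d ≤ n`, the block bidiagonal system with `x₀` known and `x_{j+1} = p_j x_j`
has the form `(1 - shiftMat E p) y = E₀ x₀`, and its only solution lists all `x_j`. Taking
`B = E₀ x₀ sᵀ` with a unit vector `s` gives an exact solution of rank one, so a successful algorithm
must reveal `x_{t+1}`.

A deterministic algorithm with `4 t k ≤ d²` fails for almost every `p`. Before round `j` is
answered, the blocks below `j` may be given away for free; the inputs that still yield the same
responses contain an affine slice `p + freeDir Q φ p j`, on which the query matrix of the round is
constant. The invariant is that `x_{j+1}` still varies in more than `d / 2` dimensions along this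
slice. For the next round, the vectors that would violate the invariant lie in a subspace of
dimension at most `d / 2`, by a dimension count, and `x_{j+1}` avoids that subspace almost surely.
After `t` rounds all responses are constant on the slice while `x_{t+1}` is not. The slices are
nested, so the null sets combine by Fubini and translation invariance.

A further use of Fubini over the random seed gives one instance on which the algorithm almost surely
fails. Hence no such `d` exists, which forces `n² < 144 t³ k`; this polynomial bound is stronger
than the logarithmic one.
-/

open MeasureTheory ProbabilityTheory Matrix
open scoped ENNReal Classical

noncomputable section

/-- Squared Euclidean norm of a finitely-indexed real vector. -/
def sqNorm {ι : Type*} [Fintype ι] (x : ι → ℝ) : ℝ := ∑ i, x i ^ 2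

/-- Squared Frobenius norm of a real matrix. -/
def frobSq {m n : Type*} [Fintype m] [Fintype n] (A : Matrix m n ℝ) : ℝ :=
  ∑ i, ∑ j, A i j ^ 2

/-- Spectral (ℓ₂ operator) norm of a real matrix. -/
def specNorm {m n : Type*} [Fintype m] [Fintype n] (A : Matrix m n ℝ) : ℝ :=
  sSup ((fun x : n → ℝ => Real.sqrt (sqNorm (A.mulVec x))) '' {x | sqNorm x ≤ 1})

/-- `i`-th largest singular value (1-based), characterized via
`σ_i(A) = min {‖A − X‖ : rank X ≤ i − 1}`. -/
def singVal {m n : Type*} [Fintype m] [Fintype n] (A : Matrix m n ℝ) (i : ℕ) : ℝ :=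
  sInf {c | ∃ X : Matrix m n ℝ, X.rank ≤ i - 1 ∧ c = specNorm (A - X)}

/-- Flattening of an `n × n` matrix into a vector in `ℝ^{n²}`. -/
def vec (n : ℕ) (A : Matrix (Fin n) (Fin n) ℝ) : Fin (n * n) → ℝ :=
  fun i => A (finProdFinEquiv.symm i).1 (finProdFinEquiv.symm i).2

/-- `u ⊗ v = vec (u vᵀ) ∈ ℝ^{n²}`. -/
def tensor {n : ℕ} (u v : Fin n → ℝ) : Fin (n * n) → ℝ :=
  vec n (Matrix.of fun i j => u i * v j)

/-- Standard Gaussian measure on `ι → ℝ`. -/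
def stdGaussian (ι : Type*) [Fintype ι] : Measure (ι → ℝ) :=
  Measure.pi fun _ => gaussianReal 0 1

/-- Standard Gaussian measure on `n × n` matrices (as `Fin n → Fin n → ℝ`). -/
def stdGaussianMat (n : ℕ) : Measure (Fin n → Fin n → ℝ) :=
  Measure.pi fun _ => stdGaussian (Fin n)

/-- Query maps of a deterministic `t`-round adaptive algorithm making `k` linear
measurements per round on inputs in `ℝ^N`. -/
def QueryMaps (N k t : ℕ) : Type :=
  (j : Fin t) → (Fin (j : ℕ) → (Fin k → ℝ)) → Matrix (Fin k) (Fin N) ℝ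

namespace QueryMaps

variable {N k t : ℕ}

/-- Restriction of a round-`j` history to the first `i` rounds. -/
def prefixHist {j : Fin t} (h : Fin (j : ℕ) → Fin k → ℝ) {i : Fin t}
    (hij : (i : ℕ) < (j : ℕ)) : Fin (i : ℕ) → Fin k → ℝ :=
  fun l => h ⟨l.1, l.isLt.trans hij⟩

/-- Validity of query maps: measurability, orthonormal rows within each round, and
orthogonality across rounds along consistent histories. -/
def Valid (Q : QueryMaps N k t) : Prop :=
  (∀ (j : Fin t) (i : Fin k) (l : Fin N), Measurable fun h => Q j h i l) ∧
  (∀ (j : Fin t) (h : Fin (j : ℕ) → Fin k → ℝ), Q j h * (Q j h)ᵀ = 1) ∧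
  (∀ (j i : Fin t) (hij : (i : ℕ) < (j : ℕ)) (h : Fin (j : ℕ) → Fin k → ℝ),
      Q j h * (Q i (prefixHist h hij))ᵀ = 0)

/-- Responses of the algorithm under exact linear measurements of `a`. -/
def resp (Q : QueryMaps N k t) (a : Fin N → ℝ) (j : Fin t) : Fin k → ℝ :=
  (Q j fun i => resp Q a ⟨i.1, i.isLt.trans j.isLt⟩).mulVec a
termination_by (j : ℕ)
decreasing_by exact i.isLt

/-- Responses of the algorithm under noisy linear measurements of `a`, with fresh
per-round noise `g`. -/
def nresp (Q : QueryMaps N k t) (a : Fin N → ℝ) (g : Fin t → Fin k → ℝ) (j : Fin t) :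
    Fin k → ℝ :=
  ((Q j fun i => nresp Q a g ⟨i.1, i.isLt.trans j.isLt⟩).mulVec a) + g j
termination_by (j : ℕ)
decreasing_by exact i.isLt

/-- The `tk × N` matrix stacking all the query matrices realized along the run of the
algorithm on input `a` (exact measurements). -/
def runMat (Q : QueryMaps N k t) (a : Fin N → ℝ) : Matrix (Fin t × Fin k) (Fin N) ℝ :=
  Matrix.of fun p l =>
    Q p.1 (fun i => resp Q a ⟨i.1, i.isLt.trans p.1.isLt⟩) p.2 l

end QueryMaps

/-- Kullback–Leibler divergence, valued in `[0, ∞]`, defined with the natural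
logarithm. -/
def klDiv {Ω : Type*} [MeasurableSpace Ω] (P Q : Measure Ω) : ℝ≥0∞ :=
  if P ≪ Q ∧ Integrable (fun x => Real.log ((P.rnDeriv Q x).toReal)) P then
    ENNReal.ofReal (∫ x, Real.log ((P.rnDeriv Q x).toReal) ∂P)
  else ⊤


/-- The rank-`r` plant `Σ_{i=1}^r uᵢ vᵢᵀ` built from the rows of `U` and `V`. -/
def plant {n r : ℕ} (U V : Fin r → Fin n → ℝ) : Matrix (Fin n) (Fin n) ℝ :=
  Matrix.of fun i j => ∑ l, U l i * V l j

/-- Schatten-`p` norm (real `p`), via the singular values. -/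
def schattenNorm {n : ℕ} (p : ℝ) (A : Matrix (Fin n) (Fin n) ℝ) : ℝ :=
  (∑ i ∈ Finset.range n, singVal A (i + 1) ^ p) ^ (1 / p)

/-- Ky-Fan `p` norm: sum of the `p` largest singular values. -/
def kyFanNorm {n : ℕ} (p : ℕ) (A : Matrix (Fin n) (Fin n) ℝ) : ℝ :=
  ∑ i ∈ Finset.range p, singVal A (i + 1)

lemma ae_of_ae_ae_add {G Y : Type*} [MeasurableSpace G] [AddGroup G] [MeasurableAdd₂ G]
    [MeasurableSpace Y] {μ : Measure G} [SFinite μ] [μ.IsAddRightInvariant]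
    {ν : Measure Y} [SFinite ν] [NeZero ν] {f : Y → G} (hf : Measurable f) {P : G → Prop}
    (hP : MeasurableSet {x | P x}) (h : ∀ᵐ x ∂μ, ∀ᵐ y ∂ν, P (x + f y)) : ∀ᵐ x ∂μ, P x := by
  have hmeas : MeasurableSet {z : G × Y | P (z.1 + f z.2)} :=
    (measurable_fst.add (hf.comp measurable_snd)) hP
  obtain ⟨y, hy⟩ := ((Measure.ae_ae_comm hmeas).mp h).exists
  exact (eventually_add_right_iff μ (f y)).mp hy

lemma ae_add_apply_notMem {E F : Type*} [NormedAddCommGroup E] [NormedSpace ℝ E]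
    [FiniteDimensional ℝ E] [MeasurableSpace E] [BorelSpace E] [AddCommGroup F] [Module ℝ F]
    (μ : Measure E) [μ.IsAddHaarMeasure] {L : E →ₗ[ℝ] F} {V : Submodule ℝ F}
    (h : ¬ LinearMap.range L ≤ V) (c : F) : ∀ᵐ v ∂μ, c + L v ∉ V := by
  let s : AffineSubspace ℝ E := V.toAffineSubspace.comap (AffineMap.const ℝ E c + L.toAffineMap)
  have hs : s ≠ ⊤ := by
    intro htop
    have hmem (v : E) : c + L v ∈ V := (htop ▸ AffineSubspace.mem_top ℝ E v : v ∈ s)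
    have hc : c ∈ V := by simpa using hmem 0
    refine h ?_
    rintro _ ⟨v, rfl⟩
    exact (V.add_mem_iff_right hc).mp (hmem v)
  exact measure_eq_zero_iff_ae_notMem.mp (Measure.addHaar_affineSubspace μ s hs)

section LinearAlgebra

open Module

variable {K : Type*} [Field K]

lemma finrank_le_finrank_map_ker_add {E F W : Type*} [AddCommGroup E] [Module K E]
    [AddCommGroup F] [Module K F] [FiniteDimensional K F]
    [AddCommGroup W] [Module K W] [FiniteDimensional K W]
    {T : E →ₗ[K] F} (hT : Function.Surjective T) (G : E →ₗ[K] W) :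
    finrank K F ≤ finrank K ((LinearMap.ker G).map T) + finrank K W := by
  set S := LinearMap.ker G
  have hsurj : Function.Surjective (S.mapQ (S.map T) T (S.le_comap_map T)) := by
    rintro ⟨y⟩
    obtain ⟨x, rfl⟩ := hT y
    exact ⟨Submodule.Quotient.mk x, rfl⟩
  have : FiniteDimensional K (E ⧸ S) := G.quotKerEquivRange.symm.finiteDimensional
  have hquot : finrank K (F ⧸ S.map T) ≤ finrank K W :=
    calc finrank K (F ⧸ S.map T) ≤ finrank K (E ⧸ S) :=
          LinearMap.finrank_le_finrank_of_surjective hsurj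
      _ = finrank K (LinearMap.range G) := G.quotKerEquivRange.finrank_eq
      _ ≤ finrank K W := Submodule.finrank_le _
  have := (S.map T).finrank_quotient_add_finrank
  omega

lemma finrank_le_sum_finrank_map_proj {ι : Type*} [Fintype ι] {M : ι → Type*}
    [∀ i, AddCommGroup (M i)] [∀ i, Module K (M i)] [∀ i, FiniteDimensional K (M i)]
    (S : Submodule K (∀ i, M i)) :
    finrank K S ≤ ∑ i, finrank K (S.map (LinearMap.proj i : (∀ i, M i) →ₗ[K] M i)) := by
  rw [← finrank_pi_fintype]
  refine LinearMap.finrank_le_finrank_of_injective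
    (f := LinearMap.pi fun i => (LinearMap.proj i).submoduleMap S) fun z z' h => ?_
  ext i
  exact congrArg Subtype.val (congrFun h i)

lemma exists_matrix_mulVec_eq {ι m n : Type*} [Fintype n]
    {x : ι → n → K} (hx : LinearIndependent K x) (y : ι → m → K) :
    ∃ N : Matrix m n K, ∀ i, N *ᵥ x i = y i := by
  classical
  obtain ⟨f, hf⟩ := LinearMap.exists_extend (Finsupp.linearCombination K y ∘ₗ hx.repr)
  refine ⟨LinearMap.toMatrix' f, fun i => ?_⟩
  have hi := LinearMap.congr_fun hf ⟨x i, Submodule.subset_span ⟨i, rfl⟩⟩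
  simpa [hx.repr_eq_single i] using hi

variable {m n : Type*} [Fintype m] [Fintype n]

lemma card_mul_card_le_sum_finrank_map_mulVec {ι W : Type*} [Fintype ι]
    [AddCommGroup W] [Module K W] [FiniteDimensional K W]
    {x : ι → n → K} (hx : LinearIndependent K x) (G : Matrix m n K →ₗ[K] W) :
    Fintype.card ι * Fintype.card m ≤
      ∑ i, finrank K ((LinearMap.ker G).map ((mulVecBilin K K).flip (x i))) + finrank K W := by
  classical
  let T : Matrix m n K →ₗ[K] ι → m → K := LinearMap.pi fun i => (mulVecBilin K K).flip (x i)
  have hT : Function.Surjective T := fun y => by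
    obtain ⟨N, hN⟩ := exists_matrix_mulVec_eq hx y
    exact ⟨N, funext hN⟩
  calc Fintype.card ι * Fintype.card m = finrank K (ι → m → K) := by
        simp [finrank_pi_fintype]
    _ ≤ finrank K ((LinearMap.ker G).map T) + finrank K W := finrank_le_finrank_map_ker_add hT G
    _ ≤ _ := by
        gcongr
        refine (finrank_le_sum_finrank_map_proj _).trans_eq ?_
        refine Finset.sum_congr rfl fun i _ => ?_
        rw [← Submodule.map_comp, LinearMap.proj_pi]

lemma exists_finrank_le_forall_notMem_lt_finrank_map_mulVec {W : Type*}
    [AddCommGroup W] [Module K W] [FiniteDimensional K W] (G : Matrix m n K →ₗ[K] W) (q : ℕ) :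
    ∃ V : Submodule K (n → K),
      finrank K V * Fintype.card m ≤ finrank K V * q + finrank K W ∧
      ∀ x ∉ V, q < finrank K ((LinearMap.ker G).map ((mulVecBilin K K).flip x)) := by
  -- A basis of the span `V` of the bad vectors can be sent anywhere, so `ker G` would still cover
  -- all but `finrank W` dimensions; yet each basis vector, being bad, contributes at most `q`.
  let s : Set (n → K) := {x | finrank K ((LinearMap.ker G).map ((mulVecBilin K K).flip x)) ≤ q}
  obtain ⟨b, hbs, hspan, hb⟩ := exists_linearIndependent K s
  have : Fintype b := hb.setFinite.fintype
  have hV : finrank K (Submodule.span K s) = Fintype.card b := by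
    rw [← hspan, finrank_span_set_eq_card hb, Set.toFinset_card]
  refine ⟨Submodule.span K s, ?_, fun x hx => not_le.mp fun hle => hx (Submodule.subset_span hle)⟩
  calc finrank K (Submodule.span K s) * Fintype.card m
      ≤ ∑ x : b, finrank K ((LinearMap.ker G).map ((mulVecBilin K K).flip x.1)) + finrank K W := by
        rw [hV]
        exact card_mul_card_le_sum_finrank_map_mulVec hb G
    _ ≤ ∑ _x : b, q + finrank K W := by
        gcongr with x
        exact hbs x.2
    _ = finrank K (Submodule.span K s) * q + finrank K W := by simp [hV]

end LinearAlgebra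

lemma measurable_mulVec {Z m n : Type*} [MeasurableSpace Z] [Fintype n] {A : Z → Matrix m n ℝ}
    {x : Z → n → ℝ} (hA : ∀ i j, Measurable fun z => A z i j) (hx : Measurable x) :
    Measurable fun z => A z *ᵥ x z :=
  measurable_pi_iff.mpr fun i => Finset.measurable_sum _ fun j _ =>
    (hA i j).mul ((measurable_pi_apply j).comp hx)

namespace QueryMaps

variable {N k t : ℕ}

/-- The query matrix used in round `i` on input `a`: the `i`-th block of rows of `runMat`. -/
def roundMat (Q : QueryMaps N k t) (a : Fin N → ℝ) (i : Fin t) : Matrix (Fin k) (Fin N) ℝ :=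
  Q i fun l => Q.resp a ⟨l, l.isLt.trans i.isLt⟩

lemma resp_eq_roundMat_mulVec (Q : QueryMaps N k t) (a : Fin N → ℝ) (i : Fin t) :
    Q.resp a i = Q.roundMat a i *ᵥ a := by
  rw [resp, roundMat]

lemma roundMat_congr {Q : QueryMaps N k t} {a a' : Fin N → ℝ} {i : Fin t}
    (h : ∀ l < i, Q.resp a l = Q.resp a' l) : Q.roundMat a i = Q.roundMat a' i :=
  congrArg (Q i) (funext fun l => h ⟨l, l.isLt.trans i.isLt⟩ l.isLt)

lemma resp_add_eq {Q : QueryMaps N k t} {a w : Fin N → ℝ} {i : Fin t}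
    (h : ∀ l ≤ i, Q.roundMat a l *ᵥ w = 0) : Q.resp (a + w) i = Q.resp a i := by
  induction i using WellFoundedLT.induction with
  | _ i ih =>
    have hround : Q.roundMat (a + w) i = Q.roundMat a i :=
      roundMat_congr fun l hl => ih l hl fun l' hl' => h l' (hl'.trans hl.le)
    rw [resp_eq_roundMat_mulVec, resp_eq_roundMat_mulVec, hround, mulVec_add, h i le_rfl, add_zero]

lemma measurable_resp {Z : Type*} [MeasurableSpace Z] {Q : Z → QueryMaps N k t}
    (hQ : ∀ (j : Fin t) (i : Fin k) (l : Fin N),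
      Measurable fun p : Z × (Fin (j : ℕ) → Fin k → ℝ) => Q p.1 j p.2 i l)
    {a : Z → Fin N → ℝ} (ha : Measurable a) : Measurable fun z => (Q z).resp (a z) := by
  refine measurable_pi_iff.mpr fun j => ?_
  induction j using WellFoundedLT.induction with
  | _ j ih =>
    have hhist : Measurable fun z => fun l : Fin (j : ℕ) =>
        (Q z).resp (a z) ⟨l, l.isLt.trans j.isLt⟩ :=
      measurable_pi_iff.mpr fun l => ih ⟨l, l.isLt.trans j.isLt⟩ l.isLt
    simp only [resp_eq_roundMat_mulVec]
    exact measurable_mulVec (fun i l => (hQ j i l).comp (measurable_id.prodMk hhist)) ha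

end QueryMaps

section PointerChasing

open Module

/-- The matrices `p₀, …, p_t` of a pointer chasing instance in `ℝ^d`. Bare functions rather than
`Matrix`, so that the instances needed to integrate over instances are available. -/
abbrev Blocks (t d : ℕ) : Type := Fin (t + 1) → Fin d → Fin d → ℝ

variable {N k t d : ℕ}

/-- The sequence `x₀, p₀ x₀, p₁ p₀ x₀, …` of pointer chasing, whose last term is sought. -/
def chain (x₀ : Fin d → ℝ) (p : Blocks t d) : Fin (t + 2) → Fin d → ℝ :=
  Fin.induction (motive := fun _ => Fin d → ℝ) x₀ fun j x => of (p j) *ᵥ x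

@[simp] lemma chain_zero (x₀ : Fin d → ℝ) (p : Blocks t d) : chain x₀ p 0 = x₀ := rfl

@[simp] lemma chain_succ (x₀ : Fin d → ℝ) (p : Blocks t d) (j : Fin (t + 1)) :
    chain x₀ p j.succ = of (p j) *ᵥ chain x₀ p j.castSucc :=
  rfl

lemma chain_congr {x₀ : Fin d → ℝ} {p q : Blocks t d} {j : Fin (t + 2)}
    (h : ∀ i : Fin (t + 1), i.castSucc < j → p i = q i) : chain x₀ p j = chain x₀ q j := by
  induction j using Fin.induction with
  | zero => rfl
  | succ j ih =>
    rw [chain_succ, chain_succ, h j Fin.castSucc_lt_succ,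
      ih fun i hi => h i (hi.trans Fin.castSucc_lt_succ)]

lemma continuous_chain (x₀ : Fin d → ℝ) (j : Fin (t + 2)) :
    Continuous fun p : Blocks t d => chain x₀ p j := by
  induction j using Fin.induction with
  | zero => exact continuous_const
  | succ j ih => exact Continuous.matrix_mulVec (continuous_apply j) ih

/-- The map `v ↦ v_j x`, by which a perturbation `v` of the `j`-th block moves the chain. -/
def blockMulVec (j : Fin (t + 1)) (x : Fin d → ℝ) : Blocks t d →ₗ[ℝ] Fin d → ℝ :=
  (mulVecBilin ℝ ℝ).flip x ∘ₗ (ofLinearEquiv ℝ).toLinearMap ∘ₗ LinearMap.proj j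

lemma blockMulVec_apply (j : Fin (t + 1)) (x : Fin d → ℝ) (v : Blocks t d) :
    blockMulVec j x v = of (v j) *ᵥ x :=
  rfl

/-- Embedding of a matrix as the `j`-th block, all others being zero. -/
def singleBlock (j : Fin (t + 1)) : Matrix (Fin d) (Fin d) ℝ →ₗ[ℝ] Blocks t d :=
  LinearMap.single ℝ (fun _ => Fin d → Fin d → ℝ) j ∘ₗ (ofLinearEquiv ℝ).symm.toLinearMap

/-- The directions in which the blocks `p` of an input `φ p` can be moved while fixing the blocks
before the `j`-th one and all responses in the rounds before round `j`. -/
def freeDir (Q : QueryMaps N k t) (φ : Blocks t d →ᵃ[ℝ] Fin N → ℝ) (p : Blocks t d)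
    (j : Fin (t + 1)) : Submodule ℝ (Blocks t d) :=
  (⨅ i : Fin (t + 1), ⨅ _ : i < j, LinearMap.ker (LinearMap.proj i)) ⊓
    ⨅ i : Fin t, ⨅ _ : i.castSucc < j,
      LinearMap.ker ((Q.roundMat (φ p) i).mulVecLin ∘ₗ φ.linear)

/-- The measurements, by the query matrices used on input `φ p`, of a perturbation of the `j`-th
block of `p`. -/
def blockMeasurements (Q : QueryMaps N k t) (φ : Blocks t d →ᵃ[ℝ] Fin N → ℝ) (p : Blocks t d)
    (j : Fin (t + 1)) : Matrix (Fin d) (Fin d) ℝ →ₗ[ℝ] Fin t → Fin k → ℝ :=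
  LinearMap.pi fun i => (Q.roundMat (φ p) i).mulVecLin ∘ₗ φ.linear ∘ₗ singleBlock j

variable {Q : QueryMaps N k t} {φ : Blocks t d →ᵃ[ℝ] Fin N → ℝ} {p v : Blocks t d}

lemma mem_freeDir {j : Fin (t + 1)} : v ∈ freeDir Q φ p j ↔ (∀ i < j, v i = 0) ∧
    ∀ i : Fin t, i.castSucc < j → Q.roundMat (φ p) i *ᵥ φ.linear v = 0 := by
  simp [freeDir, Submodule.mem_iInf]

lemma freeDir_zero : freeDir Q φ p 0 = ⊤ := by
  ext
  simp [mem_freeDir]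

lemma freeDir_anti : Antitone (freeDir Q φ p) := fun i j hij v hv => by
  rw [mem_freeDir] at hv ⊢
  exact ⟨fun l hl => hv.1 l (hl.trans_le hij), fun l hl => hv.2 l (hl.trans_le hij)⟩

lemma resp_add_of_mem_freeDir {j : Fin (t + 1)} (hv : v ∈ freeDir Q φ p j) {i : Fin t}
    (hi : i.castSucc < j) : Q.resp (φ (p + v)) i = Q.resp (φ p) i := by
  have hφ : φ (p + v) = φ p + φ.linear v := by
    rw [add_comm p, add_comm (φ p)]
    exact φ.map_vadd p v
  rw [hφ]
  exact QueryMaps.resp_add_eq fun l hl =>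
    (mem_freeDir.mp hv).2 l ((Fin.castSucc_le_castSucc_iff.mpr hl).trans_lt hi)

lemma freeDir_succ_add {i : Fin t} (hv : v ∈ freeDir Q φ p i.castSucc) :
    freeDir Q φ (p + v) i.succ = freeDir Q φ p i.succ := by
  have hround (l : Fin t) (hl : l.castSucc < i.succ) :
      Q.roundMat (φ (p + v)) l = Q.roundMat (φ p) l :=
    QueryMaps.roundMat_congr fun l' hl' => resp_add_of_mem_freeDir hv <|
      Fin.castSucc_lt_castSucc_iff.mpr (hl'.trans_le (Fin.castSucc_lt_succ_iff.mp hl))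
  ext w
  simp only [mem_freeDir]
  exact and_congr_right fun _ => forall₂_congr fun l hl => by rw [hround l hl]

lemma chain_succ_add_of_mem_freeDir (x₀ : Fin d → ℝ) {j : Fin (t + 1)}
    (hv : v ∈ freeDir Q φ p j) :
    chain x₀ (p + v) j.succ = chain x₀ p j.succ + blockMulVec j (chain x₀ p j.castSucc) v := by
  have hprev : chain x₀ (p + v) j.castSucc = chain x₀ p j.castSucc :=
    chain_congr fun i hi => by
      simp [(mem_freeDir.mp hv).1 i (Fin.castSucc_lt_castSucc_iff.mp hi)]
  rw [chain_succ, chain_succ, hprev, blockMulVec_apply, Pi.add_apply, ← of_add_of, add_mulVec]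

lemma ker_blockMeasurements_map_le_freeDir_map (j : Fin (t + 1)) (x : Fin d → ℝ) :
    (LinearMap.ker (blockMeasurements Q φ p j)).map ((mulVecBilin ℝ ℝ).flip x) ≤
      (freeDir Q φ p j).map (blockMulVec j x) := by
  rintro _ ⟨M, hM, rfl⟩
  refine ⟨singleBlock j M, mem_freeDir.mpr ⟨fun i hi => ?_,
    fun i _ => congrFun (LinearMap.mem_ker.mp hM) i⟩, ?_⟩
  · simp [singleBlock, hi.ne]
  · simp [singleBlock, blockMulVec]

lemma exists_finrank_le_forall_notMem_lt_finrank_freeDir_map (Q : QueryMaps N k t)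
    (φ : Blocks t d →ᵃ[ℝ] Fin N → ℝ) (p : Blocks t d) (j : Fin (t + 1)) (hd : 0 < d)
    (htk : 4 * (t * k) ≤ d ^ 2) :
    ∃ V : Submodule ℝ (Fin d → ℝ), finrank ℝ V ≤ d / 2 ∧
      ∀ x ∉ V, d / 2 < finrank ℝ ((freeDir Q φ p j).map (blockMulVec j x)) := by
  obtain ⟨V, hV, hVx⟩ := exists_finrank_le_forall_notMem_lt_finrank_map_mulVec
    (blockMeasurements Q φ p j) (d / 2)
  refine ⟨V, ?_, fun x hx => (hVx x hx).trans_le <|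
    Submodule.finrank_mono (ker_blockMeasurements_map_le_freeDir_map j x)⟩
  have hV' : finrank ℝ V * d ≤ finrank ℝ V * (d / 2) + t * k := by
    simpa [finrank_pi_fintype] using hV
  have hhalf : finrank ℝ V * (2 * (d / 2)) ≤ finrank ℝ V * d := by gcongr; omega
  have : 2 * finrank ℝ V * d ≤ d * d := by nlinarith
  have := Nat.le_of_mul_le_mul_right this hd
  omega

lemma ae_add_blockMulVec_notMem {S : Submodule ℝ (Blocks t d)} {j : Fin (t + 1)} {x : Fin d → ℝ}
    {V : Submodule ℝ (Fin d → ℝ)} (h : finrank ℝ V < finrank ℝ (S.map (blockMulVec j x)))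
    (c : Fin d → ℝ) : ∀ᵐ v : S ∂Measure.addHaar, c + blockMulVec j x v ∉ V := by
  refine ae_add_apply_notMem _ (L := (blockMulVec j x).domRestrict S) (fun hle => ?_) c
  rw [LinearMap.range_domRestrict] at hle
  exact h.not_ge (Submodule.finrank_mono hle)

/-- Induction from the last round down: almost every `v` moves the next pointer out of the
exceptional subspace of the next round, and then the claim holds almost everywhere on the smaller
slice through `p + v`. -/
lemma ae_resp_ne_chain_of_lt_finrank_map {x₀ : Fin d → ℝ} (hd : 0 < d)
    (htk : 4 * (t * k) ≤ d ^ 2) {f : (Fin t → Fin k → ℝ) → Fin d → ℝ}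
    (hf : MeasurableSet {p | f (Q.resp (φ p)) ≠ chain x₀ p (Fin.last _)}) {j : Fin (t + 1)}
    (hp : d / 2 < finrank ℝ ((freeDir Q φ p j).map (blockMulVec j (chain x₀ p j.castSucc)))) :
    ∀ᵐ v : freeDir Q φ p j ∂Measure.addHaar,
      f (Q.resp (φ (p + v.1))) ≠ chain x₀ (p + v.1) (Fin.last _) := by
  induction j using Fin.reverseInduction generalizing p with
  | last =>
    have hbot : finrank ℝ (⊥ : Submodule ℝ (Fin d → ℝ)) ≤ d / 2 := by simp
    filter_upwards [ae_add_blockMulVec_notMem (hbot.trans_lt hp)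
      (chain x₀ p (Fin.last _) - f (Q.resp (φ p)))] with v hv heq
    have hresp : Q.resp (φ (p + v.1)) = Q.resp (φ p) :=
      funext fun i => resp_add_of_mem_freeDir v.2 i.castSucc_lt_last
    rw [hresp, ← Fin.succ_last, chain_succ_add_of_mem_freeDir x₀ v.2] at heq
    apply hv
    rw [heq, Fin.succ_last]
    simp
  | cast i ih =>
    obtain ⟨V, hV, hVx⟩ :=
      exists_finrank_le_forall_notMem_lt_finrank_freeDir_map Q φ p i.succ hd htk
    have hmeas : MeasurableSet {v : freeDir Q φ p i.castSucc |
        f (Q.resp (φ (p + v.1))) ≠ chain x₀ (p + v.1) (Fin.last _)} :=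
      (measurable_subtype_coe.const_add p) hf
    refine ae_of_ae_ae_add (ν := (Measure.addHaar : Measure (freeDir Q φ p i.succ)))
      (f := Submodule.inclusion (freeDir_anti i.castSucc_lt_succ.le))
      (LinearMap.continuous_of_finiteDimensional _).measurable hmeas ?_
    filter_upwards [ae_add_blockMulVec_notMem (hV.trans_lt hp) (chain x₀ p i.castSucc.succ)]
      with v hv
    rw [← chain_succ_add_of_mem_freeDir x₀ v.2] at hv
    have hfree := freeDir_succ_add v.2
    have hae := ih (p := p + v.1) (by rw [hfree]; exact hVx _ hv)
    rw [hfree] at hae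
    simpa only [Submodule.coe_add, Submodule.coe_inclusion, add_assoc] using hae

lemma ae_resp_ne_chain {x₀ : Fin d → ℝ} (hx₀ : x₀ ≠ 0) (htk : 4 * (t * k) ≤ d ^ 2)
    {f : (Fin t → Fin k → ℝ) → Fin d → ℝ}
    (hf : MeasurableSet {p | f (Q.resp (φ p)) ≠ chain x₀ p (Fin.last _)}) :
    ∀ᵐ p : Blocks t d ∂Measure.addHaar, f (Q.resp (φ p)) ≠ chain x₀ p (Fin.last _) := by
  have hd : 0 < d := Nat.pos_of_ne_zero fun hd => hx₀ <| by subst hd; exact Subsingleton.elim _ _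
  have hrange : LinearMap.range (blockMulVec (t := t) 0 x₀) = ⊤ :=
    LinearMap.range_eq_top.mpr fun y => by
      obtain ⟨M, hM⟩ := exists_matrix_mulVec_eq
        (LinearIndependent.of_subsingleton (v := fun _ : Unit => x₀) () hx₀) fun _ => y
      exact ⟨fun _ => M, hM ()⟩
  refine ae_of_ae_ae_add (ν := (Measure.addHaar : Measure (⊤ : Submodule ℝ (Blocks t d))))
    (f := Subtype.val) measurable_subtype_coe hf <| .of_forall fun p => ?_
  have hp : d / 2 < finrank ℝ ((freeDir Q φ p 0).map (blockMulVec 0 x₀)) := by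
    rw [freeDir_zero, Submodule.map_top, hrange, finrank_top, finrank_fin_fun]
    exact Nat.div_lt_self hd one_lt_two
  have hae := ae_resp_ne_chain_of_lt_finrank_map hd htk hf hp
  rwa [freeDir_zero] at hae

lemma exists_ae_resp_ne_chain {Ω : Type*} [MeasurableSpace Ω] (μ : Measure Ω) [SFinite μ]
    {Qf : Ω → QueryMaps N k t}
    (hQf : ∀ (j : Fin t) (i : Fin k) (l : Fin N),
      Measurable fun q : Ω × (Fin (j : ℕ) → Fin k → ℝ) => Qf q.1 j q.2 i l)
    {f : Ω → (Fin t → Fin k → ℝ) → Fin d → ℝ} (hf : Measurable (Function.uncurry f))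
    (φ : Blocks t d →ᵃ[ℝ] Fin N → ℝ) {x₀ : Fin d → ℝ} (hx₀ : x₀ ≠ 0)
    (htk : 4 * (t * k) ≤ d ^ 2) :
    ∃ p, ∀ᵐ ω ∂μ, f ω ((Qf ω).resp (φ p)) ≠ chain x₀ p (Fin.last _) := by
  have hresp : Measurable fun z : Ω × Blocks t d => (Qf z.1).resp (φ z.2) :=
    QueryMaps.measurable_resp (Q := fun z : Ω × Blocks t d => Qf z.1)
      (fun j i l => (hQf j i l).comp (measurable_fst.fst.prodMk measurable_snd))
      (φ.continuous_of_finiteDimensional.measurable.comp measurable_snd)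
  have hmeas : MeasurableSet {z : Ω × Blocks t d |
      f z.1 ((Qf z.1).resp (φ z.2)) ≠ chain x₀ z.2 (Fin.last _)} :=
    (measurableSet_eq_fun (hf.comp (measurable_fst.prodMk hresp))
      ((continuous_chain x₀ _).measurable.comp measurable_snd)).compl
  have hae : ∀ᵐ ω ∂μ, ∀ᵐ p : Blocks t d ∂Measure.addHaar,
      f ω ((Qf ω).resp (φ p)) ≠ chain x₀ p (Fin.last _) :=
    .of_forall fun ω => ae_resp_ne_chain hx₀ htk (measurable_prodMk_left hmeas)
  exact ((Measure.ae_ae_comm hmeas).mp hae).exists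

end PointerChasing

lemma exists_orthonormal_frames {ι m n : Type*} [Fintype ι] [Fintype m] [Fintype n]
    [DecidableEq ι] [DecidableEq m] (h : Fintype.card ι * Fintype.card m ≤ Fintype.card n) :
    ∃ E : ι → Matrix n m ℝ, ∀ i j, (E i)ᵀ * E j = if i = j then 1 else 0 := by
  classical
  rw [← Fintype.card_prod] at h
  obtain ⟨e⟩ := Function.Embedding.nonempty_of_card_le h
  refine ⟨fun i => (1 : Matrix n n ℝ).submatrix id fun a => e (i, a), fun i j => ?_⟩
  ext a b
  by_cases hij : i = j <;> simp [mul_apply, one_apply, hij]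

section Encoding

variable {n t d : ℕ} {E : Fin (t + 2) → Matrix (Fin n) (Fin d) ℝ}

/-- The block matrix with `p_j` in position `(j + 1, j)`, relative to the frames `E`. -/
def shiftMat (E : Fin (t + 2) → Matrix (Fin n) (Fin d) ℝ) :
    Blocks t d →ₗ[ℝ] Matrix (Fin n) (Fin n) ℝ where
  toFun p := ∑ j : Fin (t + 1), E j.succ * of (p j) * (E j.castSucc)ᵀ
  map_add' p q := by
    simp only [Pi.add_apply, ← of_add_of, Matrix.mul_add, Matrix.add_mul, Finset.sum_add_distrib]
  map_smul' c p := by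
    simp [Finset.smul_sum, ← smul_of]

lemma shiftMat_mulVec (p : Blocks t d) (y : Fin n → ℝ) :
    shiftMat E p *ᵥ y =
      ∑ j : Fin (t + 1), E j.succ *ᵥ (of (p j) *ᵥ ((E j.castSucc)ᵀ *ᵥ y)) := by
  simp only [shiftMat, LinearMap.coe_mk, AddHom.coe_mk, sum_mulVec, mulVec_mulVec, Matrix.mul_assoc]

lemma transpose_mulVec_mulVec (hE : ∀ i j, (E i)ᵀ * E j = if i = j then 1 else 0)
    (i j : Fin (t + 2)) (x : Fin d → ℝ) : (E i)ᵀ *ᵥ (E j *ᵥ x) = if i = j then x else 0 := by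
  rw [mulVec_mulVec, hE]
  split_ifs <;> simp

lemma one_sub_shiftMat_mulVec_chain (hE : ∀ i j, (E i)ᵀ * E j = if i = j then 1 else 0)
    (x₀ : Fin d → ℝ) (p : Blocks t d) :
    (1 - shiftMat E p) *ᵥ (∑ j, E j *ᵥ chain x₀ p j) = E 0 *ᵥ x₀ := by
  have hproj (i : Fin (t + 2)) : (E i)ᵀ *ᵥ (∑ j, E j *ᵥ chain x₀ p j) = chain x₀ p i := by
    simp [-mulVec_mulVec, mulVec_sum, transpose_mulVec_mulVec hE]
  rw [sub_mulVec, one_mulVec, shiftMat_mulVec]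
  simp only [hproj, ← chain_succ]
  rw [Fin.sum_univ_succ, add_sub_cancel_right, chain_zero]

lemma transpose_mulVec_eq_chain (hE : ∀ i j, (E i)ᵀ * E j = if i = j then 1 else 0)
    {x₀ : Fin d → ℝ} {p : Blocks t d} {y : Fin n → ℝ}
    (h : (1 - shiftMat E p) *ᵥ y = E 0 *ᵥ x₀) (j : Fin (t + 2)) :
    (E j)ᵀ *ᵥ y = chain x₀ p j := by
  have hy : y = E 0 *ᵥ x₀ + shiftMat E p *ᵥ y := by
    rw [← h, sub_mulVec, one_mulVec, sub_add_cancel]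
  induction j using Fin.induction with
  | zero =>
    rw [hy, shiftMat_mulVec]
    simp [-mulVec_mulVec, mulVec_add, mulVec_sum, transpose_mulVec_mulVec hE,
      (Fin.succ_ne_zero _).symm]
  | succ j ih =>
    rw [hy, shiftMat_mulVec]
    simp [-mulVec_mulVec, mulVec_add, mulVec_sum, transpose_mulVec_mulVec hE, Fin.succ_ne_zero, ih]

/-- The vector `(vec A, vec B)` on which a regression algorithm makes its measurements. -/
def inputVec (n : ℕ) :
    Matrix (Fin n) (Fin n) ℝ × Matrix (Fin n) (Fin n) ℝ →ₗ[ℝ] (Fin (n * n + n * n) → ℝ) where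
  toFun AB := Fin.append (_root_.vec n AB.1) (_root_.vec n AB.2)
  map_add' AB AB' := by
    ext i
    induction i using Fin.addCases <;>
      simp only [Fin.append_left, Fin.append_right, Pi.add_apply] <;> rfl
  map_smul' c AB := by
    ext i
    induction i using Fin.addCases <;>
      simp only [Fin.append_left, Fin.append_right, Pi.smul_apply] <;> rfl

/-- The regression instance `(1 - shiftMat E p, B)` as an affine function of the blocks `p`. -/
def regressionInput (E : Fin (t + 2) → Matrix (Fin n) (Fin d) ℝ) (B : Matrix (Fin n) (Fin n) ℝ) :
    Blocks t d →ᵃ[ℝ] (Fin (n * n + n * n) → ℝ) :=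
  (inputVec n).toAffineMap.comp <|
    (AffineMap.const ℝ _ 1 - (shiftMat E).toAffineMap).prod (AffineMap.const ℝ _ B)

lemma regressionInput_apply (B : Matrix (Fin n) (Fin n) ℝ) (p : Blocks t d) :
    regressionInput E B p =
      Fin.append (_root_.vec n (1 - shiftMat E p)) (_root_.vec n B) :=
  rfl

end Encoding

section SpectralNorm

open scoped Matrix.Norms.L2Operator

lemma sqrt_sqNorm_eq_norm_toLp {n : Type*} [Fintype n] (x : n → ℝ) :
    √(sqNorm x) = ‖WithLp.toLp 2 x‖ := by
  simp [sqNorm, EuclideanSpace.norm_eq]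

lemma specNorm_eq_l2_opNorm {m n : Type*} [Fintype m] [Fintype n] [DecidableEq n]
    (A : Matrix m n ℝ) : specNorm A = ‖A‖ := by
  have hball : {x : n → ℝ | sqNorm x ≤ 1} =
      WithLp.ofLp '' Metric.closedBall (0 : EuclideanSpace ℝ n) 1 := by
    rw [Set.image_eq_preimage_of_inverse (WithLp.toLp_ofLp 2) (WithLp.ofLp_toLp 2)]
    ext x
    simp [← sqrt_sqNorm_eq_norm_toLp]
  rw [l2_opNorm_def, ← ContinuousLinearMap.sSup_unitClosedBall_eq_norm, specNorm, hball,
    Set.image_image]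
  simp only [sqrt_sqNorm_eq_norm_toLp]
  rfl

lemma specNorm_zero {m n : Type*} [Fintype m] [Fintype n] :
    specNorm (0 : Matrix m n ℝ) = 0 := by
  rw [specNorm_eq_l2_opNorm, norm_zero]

lemma specNorm_nonneg {m n : Type*} [Fintype m] [Fintype n] (A : Matrix m n ℝ) :
    0 ≤ specNorm A := by
  rw [specNorm_eq_l2_opNorm]
  exact norm_nonneg A

lemma specNorm_le_zero_iff {m n : Type*} [Fintype m] [Fintype n] {A : Matrix m n ℝ} :
    specNorm A ≤ 0 ↔ A = 0 := by
  rw [specNorm_eq_l2_opNorm, norm_le_zero_iff]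

end SpectralNorm

section Regression

variable {l m n : Type*} [Fintype l] [Fintype m] [Fintype n]

/-- The optimal value `min {‖A X - B‖ : rank X ≤ r}` of reduced-rank regression. -/
def reducedRankOpt (r : ℕ) (A : Matrix l m ℝ) (B : Matrix l n ℝ) : ℝ :=
  sInf {c | ∃ X : Matrix m n ℝ, X.rank ≤ r ∧ c = specNorm (A * X - B)}

lemma reducedRankOpt_eq_zero {r : ℕ} {A : Matrix l m ℝ} {B : Matrix l n ℝ} {X : Matrix m n ℝ}
    (hX : X.rank ≤ r) (h : A * X = B) : reducedRankOpt r A B = 0 := by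
  refine IsLeast.csInf_eq ⟨⟨X, hX, ?_⟩, ?_⟩
  · rw [h, sub_self, specNorm_zero]
  · rintro _ ⟨Y, -, rfl⟩
    exact specNorm_nonneg _

lemma mulVec_eq_of_specNorm_le {r : ℕ} (hr : 1 ≤ r) {A : Matrix l m ℝ} {b : l → ℝ} {y : m → ℝ}
    (hy : A *ᵥ y = b) {s : n → ℝ} (hs : s ⬝ᵥ s = 1) {C : ℝ} {X : Matrix m n ℝ}
    (hX : specNorm (A * X - vecMulVec b s) ≤ C * reducedRankOpt r A (vecMulVec b s)) :
    A *ᵥ (X *ᵥ s) = b := by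
  have hopt : reducedRankOpt r A (vecMulVec b s) = 0 :=
    reducedRankOpt_eq_zero ((rank_vecMulVec_le y s).trans hr) (by rw [mul_vecMulVec, hy])
  rw [hopt, mul_zero, specNorm_le_zero_iff, sub_eq_zero] at hX
  rw [mulVec_mulVec, hX, vecMulVec_mulVec, hs]
  simp

end Regression

lemma exists_block_size {n k t : ℕ} (hn : 2 ≤ n) (hk : 0 < k) (h : 144 * t ^ 3 * k ≤ n ^ 2) :
    ∃ d, 0 < d ∧ (t + 2) * d ≤ n ∧ 4 * (t * k) ≤ d ^ 2 := by
  rcases Nat.eq_zero_or_pos t with rfl | ht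
  · exact ⟨1, one_pos, by omega, by simp⟩
  have htn : 12 * t ≤ n := by
    refine (Nat.pow_le_pow_iff_left two_ne_zero).mp ?_
    calc (12 * t) ^ 2 ≤ 144 * t ^ 3 := by nlinarith [pow_pos ht 2]
      _ ≤ 144 * t ^ 3 * k := Nat.le_mul_of_pos_right _ hk
      _ ≤ n ^ 2 := h
  have hd : 0 < n / (t + 2) := Nat.div_pos (by omega) (by omega)
  refine ⟨n / (t + 2), hd, Nat.mul_div_le n (t + 2), ?_⟩
  have hn6 : n ≤ 6 * t * (n / (t + 2)) := by
    have := Nat.lt_mul_div_succ n (show 0 < t + 2 by omega)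
    nlinarith
  have hsq : 36 * t ^ 2 * (4 * (t * k)) ≤ 36 * t ^ 2 * (n / (t + 2)) ^ 2 :=
    calc 36 * t ^ 2 * (4 * (t * k)) = 144 * t ^ 3 * k := by ring
      _ ≤ n ^ 2 := h
      _ ≤ (6 * t * (n / (t + 2))) ^ 2 := by gcongr
      _ = 36 * t ^ 2 * (n / (t + 2)) ^ 2 := by ring
  exact Nat.le_of_mul_le_mul_left hsq (by positivity)

lemma one_le_log_log {x : ℝ} (hx : 16 ≤ x) : 1 ≤ Real.log (Real.log x) := by
  rw [Real.le_log_iff_exp_le (Real.log_pos (by linarith))]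
  calc Real.exp 1 ≤ 4 * Real.log 2 := by
        linarith [Real.exp_one_lt_d9, Real.log_two_gt_d9]
    _ = Real.log 16 := by
        rw [show (16 : ℝ) = 2 ^ 4 by norm_num, Real.log_pow, Nat.cast_ofNat]
    _ ≤ Real.log x := Real.log_le_log (by norm_num) hx

lemma log_le_ten_mul {x t : ℝ} (hx : 0 < x) (ht : 0 ≤ t) (h : x ≤ 144 * t ^ 3) :
    Real.log x ≤ 10 * t := by
  rw [Real.log_le_iff_le_exp hx]
  calc x ≤ 144 * t ^ 3 := h
    _ ≤ (10 * t) ^ 3 / Nat.factorial 3 := by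
        norm_num [Nat.factorial, mul_pow]
        linarith [pow_nonneg ht 3]
    _ ≤ Real.exp (10 * t) := Real.pow_div_factorial_le_exp _ (by positivity) 3

lemma log_div_log_log_le_ten_mul {n k t : ℕ} (hn : 16 ≤ n) (h : n ^ 2 ≤ 144 * t ^ 3 * k) :
    Real.log ((n : ℝ) ^ 2 / k) / Real.log (Real.log n) ≤ 10 * t := by
  have hk : 0 < k := Nat.pos_of_ne_zero fun hk => by simp [hk] at h; omega
  have hlog : Real.log ((n : ℝ) ^ 2 / k) ≤ 10 * t := by
    refine log_le_ten_mul (by positivity) t.cast_nonneg ?_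
    rw [div_le_iff₀ (by positivity)]
    exact_mod_cast h
  have hloglog : 1 ≤ Real.log (Real.log n) := one_le_log_log (by exact_mod_cast hn)
  rw [div_le_iff₀ (by linarith)]
  exact hlog.trans (le_mul_of_one_le_right (by positivity) hloglog)

theorem reduced_rank_regression_round_lower_bound_general {Ω : Type*} [MeasurableSpace Ω]
    (μ : Measure Ω) [SFinite μ] {n r k t : ℕ} (hn : 2 ≤ n) (hr : 1 ≤ r) (hk : 0 < k)
    {Qf : Ω → QueryMaps (n * n + n * n) k t}
    (hQf : ∀ (j : Fin t) (i : Fin k) (l : Fin (n * n + n * n)),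
      Measurable fun q : Ω × (Fin (j : ℕ) → Fin k → ℝ) => Qf q.1 j q.2 i l)
    {out : Ω → (Fin t → Fin k → ℝ) → Matrix (Fin n) (Fin n) ℝ}
    (hout : ∀ i j, Measurable fun q : Ω × (Fin t → Fin k → ℝ) => out q.1 q.2 i j)
    (C : ℝ) (hsucc : ∀ A B : Matrix (Fin n) (Fin n) ℝ,
      μ {ω | specNorm (A * out ω ((Qf ω).resp
          (Fin.append (_root_.vec n A) (_root_.vec n B))) - B) ≤ C * reducedRankOpt r A B} ≠ 0) :
    n ^ 2 < 144 * t ^ 3 * k := by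
  by_contra! hle
  obtain ⟨d, hd, hdn, htk⟩ := exists_block_size hn hk hle
  obtain ⟨E, hE⟩ := exists_orthonormal_frames (ι := Fin (t + 2)) (m := Fin d) (n := Fin n)
    (by simpa using hdn)
  have : NeZero d := ⟨hd.ne'⟩
  have : NeZero n := ⟨by omega⟩
  let x₀ : Fin d → ℝ := Pi.single 0 1
  let s : Fin n → ℝ := Pi.single 0 1
  let B : Matrix (Fin n) (Fin n) ℝ := vecMulVec (E 0 *ᵥ x₀) s
  have hread : Measurable (Function.uncurry fun ω h => (E (Fin.last _))ᵀ *ᵥ (out ω h *ᵥ s)) :=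
    measurable_mulVec (fun _ _ => measurable_const) (measurable_mulVec hout measurable_const)
  obtain ⟨p, hp⟩ := exists_ae_resp_ne_chain μ hQf hread (regressionInput E B)
    (Pi.single_ne_zero_iff.mpr one_ne_zero : x₀ ≠ 0) htk
  refine hsucc (1 - shiftMat E p) B (measure_mono_null (fun ω hω => ?_) (ae_iff.mp hp))
  have hsolve := mulVec_eq_of_specNorm_le hr (one_sub_shiftMat_mulVec_chain hE x₀ p)
    (by simp [s]) hω
  exact not_not.mpr (transpose_mulVec_eq_chain hE hsolve _)

/-- Round lower bound for 2-approximate reduced-rank regression in spectral norm. -/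
theorem reduced_rank_regression_round_lower_bound :
    ∃ (c : ℝ) (n₀ : ℕ), 0 < c ∧
      ∀ (n r k t : ℕ), n₀ ≤ n → 1 ≤ r → n * r ≤ k → k ≤ n ^ 2 →
      ∀ (Ω : Type) [MeasurableSpace Ω] (μ : Measure Ω) [IsProbabilityMeasure μ]
        (Qf : Ω → QueryMaps (n * n + n * n) k t)
        (out : Ω → (Fin t → Fin k → ℝ) → Matrix (Fin n) (Fin n) ℝ),
        (∀ ω, (Qf ω).Valid) →
        (∀ (j : Fin t) (i : Fin k) (l : Fin (n * n + n * n)),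
            Measurable fun p : Ω × (Fin (j : ℕ) → Fin k → ℝ) => Qf p.1 j p.2 i l) →
        (∀ i j : Fin n,
            Measurable fun p : Ω × (Fin t → Fin k → ℝ) => out p.1 p.2 i j) →
        (∀ A B : Matrix (Fin n) (Fin n) ℝ,
            (9 / 10 : ℝ≥0∞) ≤
              μ {ω | (out ω (QueryMaps.resp (Qf ω)
                        (Fin.append (vec n A) (vec n B)))).rank ≤ r ∧
                    specNorm (A * out ω (QueryMaps.resp (Qf ω)
                        (Fin.append (vec n A) (vec n B))) - B)
                      ≤ 2 * sInf {c' | ∃ X : Matrix (Fin n) (Fin n) ℝ,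
                          X.rank ≤ r ∧ c' = specNorm (A * X - B)}}) →
        c * (Real.log ((n : ℝ) ^ 2 / k) / Real.log (Real.log n)) ≤ (t : ℝ) := by
  refine ⟨1 / 10, 16, by norm_num, ?_⟩
  intro n r k t hn hr hnk _ Ω _ μ _ Qf out _ hQf hout hsucc
  have hk : 0 < k := (Nat.mul_pos (by omega) hr).trans_le hnk
  have hlt : n ^ 2 < 144 * t ^ 3 * k :=
    reduced_rank_regression_round_lower_bound_general μ (by omega) hr hk hQf hout 2 fun A B =>
      ((by norm_num : (0 : ℝ≥0∞) < 9 / 10).trans_le <|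
        (hsucc A B).trans (measure_mono fun _ hω => hω.2)).ne'
  linarith [log_div_log_log_le_ten_mul hn hlt.le]

end
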